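/- Let Γ ∈ ℝ^{p×p} be a connected interconnection. Then there exists a unique r ∈ ℝ^p with rᵀΓ = 0 and rᵀ1 = 1, and for this r one has exp(tΓ) → 1rᵀ as t → ∞. -/

import Mathlib

open Matrix Filter Topology
open scoped Kronecker

/-- `Γ` is an interconnection: off-diagonal entries are nonnegative and each diagonal
entry is minus the sum of the other entries in its row (equivalently, rows sum to zero). -/
def IsInterconnection {p : ℕ} (Γ : Matrix (Fin p) (Fin p) ℝ) : Prop :=
  (∀ i j, i ≠ j → 0 ≤ Γ i j) ∧ ∀ i, ∑ j, Γ i j = 0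

/-- `Γ` is a connected interconnection: it is an interconnection and its graph
(with an edge `(i, j)` whenever `Γ i j > 0`) has a node reachable by a directed
path from every other node. -/
def IsConnectedInterconnection {p : ℕ} (Γ : Matrix (Fin p) (Fin p) ℝ) : Prop :=
  IsInterconnection Γ ∧
    ∃ k : Fin p, ∀ i : Fin p, Relation.ReflTransGen (fun a b => 0 < Γ a b) i k

section Helpers

open scoped Matrix.Norms.Operator in
lemma aux_hasSum {p : ℕ} (M : Matrix (Fin p) (Fin p) ℝ) :
    HasSum (fun n : ℕ => ((n.factorial : ℝ)⁻¹) • M ^ n) (NormedSpace.exp M) :=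
  NormedSpace.exp_series_hasSum_exp' (𝕂 := ℝ) M

lemma aux_hasSum_entry {p : ℕ} (M : Matrix (Fin p) (Fin p) ℝ) (i j : Fin p) :
    HasSum (fun n : ℕ => ((n.factorial : ℝ)⁻¹) * (M ^ n) i j) (NormedSpace.exp M i j) := by
  have h := Pi.hasSum.1 (Pi.hasSum.1 (aux_hasSum M) i) j
  simpa using h

lemma aux_exp_mulVec {p : ℕ} (M : Matrix (Fin p) (Fin p) ℝ) (v : Fin p → ℝ)
    (h : M *ᵥ v = 0) : NormedSpace.exp M *ᵥ v = v := by
  ext i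
  have h1 : HasSum (fun n : ℕ => ∑ j, ((n.factorial : ℝ)⁻¹ * (M ^ n) i j) * v j)
      (∑ j, NormedSpace.exp M i j * v j) :=
    hasSum_sum (fun j _ => (aux_hasSum_entry M i j).mul_right (v j))
  have h2 : HasSum (fun n : ℕ => ∑ j, ((n.factorial : ℝ)⁻¹ * (M ^ n) i j) * v j) (v i) := by
    have h0 : ∀ n : ℕ, ∑ j, ((n.factorial : ℝ)⁻¹ * (M ^ n) i j) * v j
        = (n.factorial : ℝ)⁻¹ * ((M ^ n) *ᵥ v) i := by
      intro n
      simp only [Matrix.mulVec, dotProduct, Finset.mul_sum, mul_assoc]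
    simp_rw [h0]
    convert hasSum_single (f := fun n : ℕ => (n.factorial : ℝ)⁻¹ * ((M ^ n) *ᵥ v) i) 0 ?_ using 1
    · simp
    · intro n hn
      obtain ⟨m, rfl⟩ := Nat.exists_eq_succ_of_ne_zero hn
      simp [pow_succ, ← Matrix.mulVec_mulVec, h]
  exact h1.unique h2

lemma aux_exp_vecMul {p : ℕ} (M : Matrix (Fin p) (Fin p) ℝ) (v : Fin p → ℝ)
    (h : v ᵥ* M = 0) : v ᵥ* NormedSpace.exp M = v := by
  have := aux_exp_mulVec Mᵀ v (by rw [Matrix.mulVec_transpose, h])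
  rwa [Matrix.exp_transpose, Matrix.mulVec_transpose] at this

lemma aux_pow_nonneg {p : ℕ} (A : Matrix (Fin p) (Fin p) ℝ) (hA : ∀ i j, 0 ≤ A i j) (n : ℕ) :
    ∀ i j, 0 ≤ (A ^ n) i j := by
  induction n with
  | zero => intro i j; simp only [pow_zero, Matrix.one_apply]; split_ifs <;> norm_num
  | succ n ih =>
    intro i j
    rw [pow_succ, Matrix.mul_apply]
    exact Finset.sum_nonneg fun l _ => mul_nonneg (ih _ _) (hA _ _)

lemma aux_exp_nonneg {p : ℕ} (A : Matrix (Fin p) (Fin p) ℝ) (hA : ∀ i j, 0 ≤ A i j)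
    (i j : Fin p) : 0 ≤ NormedSpace.exp A i j :=
  (aux_hasSum_entry A i j).nonneg fun n =>
    mul_nonneg (by positivity) (aux_pow_nonneg A hA n i j)

lemma aux_exp_pos {p : ℕ} (A : Matrix (Fin p) (Fin p) ℝ) (hA : ∀ i j, 0 ≤ A i j)
    (i k : Fin p) (h : Relation.ReflTransGen (fun a b => 0 < A a b) i k) :
    0 < NormedSpace.exp A i k := by
  have hn : ∃ n, 0 < (A ^ n) i k := by
    induction h with
    | refl => exact ⟨0, by simp⟩
    | @tail b c _ hbc ih =>
      obtain ⟨n, hn⟩ := ih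
      refine ⟨n + 1, ?_⟩
      rw [pow_succ, Matrix.mul_apply]
      exact Finset.sum_pos' (fun l _ => mul_nonneg (aux_pow_nonneg A hA n _ _) (hA _ _))
        ⟨b, Finset.mem_univ _, mul_pos hn hbc⟩
  obtain ⟨n, hn⟩ := hn
  have hpos : 0 < (n.factorial : ℝ)⁻¹ * (A ^ n) i k := mul_pos (by positivity) hn
  exact hpos.trans_le (le_hasSum (aux_hasSum_entry A i k) n fun m _ =>
    mul_nonneg (by positivity) (aux_pow_nonneg A hA m i k))

/-- Shifting by a multiple of the identity rescales the exponential. -/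
lemma aux_exp_shift {p : ℕ} (M : Matrix (Fin p) (Fin p) ℝ) (c : ℝ) (i j : Fin p) :
    NormedSpace.exp M i j
      = NormedSpace.exp (-c) * NormedSpace.exp (M + Matrix.diagonal (fun _ => c) : Matrix (Fin p) (Fin p) ℝ) i j := by
  have hM : M = Matrix.diagonal (fun _ => -c) + (M + Matrix.diagonal (fun _ => c) : Matrix (Fin p) (Fin p) ℝ) := by
    ext a b
    by_cases hab : a = b
    · subst hab; simp
    · simp [hab]
  have hc : Commute (Matrix.diagonal (fun _ : Fin p => -c)) (M + Matrix.diagonal (fun _ => c) : Matrix (Fin p) (Fin p) ℝ) := by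
    have : Matrix.diagonal (fun _ : Fin p => -c) = Matrix.scalar (Fin p) (-c) := rfl
    rw [this]
    exact Matrix.scalar_commute (-c) (fun _ => Commute.all _ _) _
  conv_lhs => rw [hM, Matrix.exp_add_of_commute _ _ hc, Matrix.exp_diagonal]
  rw [Matrix.diagonal_mul, Pi.coe_exp]

lemma aux_shift_nonneg {p : ℕ} (Γ : Matrix (Fin p) (Fin p) ℝ)
    (hΓ : ∀ i j, i ≠ j → 0 ≤ Γ i j) :
    ∃ c : ℝ, ∀ i j, Γ i j ≤ (Γ + Matrix.diagonal (fun _ => c) : Matrix (Fin p) (Fin p) ℝ) i j ∧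
      0 ≤ (Γ + Matrix.diagonal (fun _ => c) : Matrix (Fin p) (Fin p) ℝ) i j := by
  refine ⟨∑ i, |Γ i i|, fun i j => ?_⟩
  have h1 : |Γ i i| ≤ ∑ i, |Γ i i| :=
    Finset.single_le_sum (f := fun i => |Γ i i|) (fun _ _ => abs_nonneg _) (Finset.mem_univ i)
  by_cases hij : i = j
  · subst hij
    have h2 := neg_abs_le (Γ i i)
    have h3 := abs_nonneg (Γ i i)
    simp only [Matrix.add_apply, Matrix.diagonal_apply_eq]
    constructor <;> linarith
  · simp [hij, hΓ i j hij]

lemma aux_real_exp_pos (c : ℝ) : 0 < (NormedSpace.exp c : ℝ) := by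
  rw [← Real.exp_eq_exp_ℝ]; exact Real.exp_pos c

/-- Entries of `x` lie in an interval of length `d`. -/
def AuxOsc {p : ℕ} (x : Fin p → ℝ) (d : ℝ) : Prop :=
  ∃ a, ∀ i, a ≤ x i ∧ x i ≤ a + d

lemma aux_contract {p : ℕ} (S : Matrix (Fin p) (Fin p) ℝ) (hS : ∀ i j, 0 ≤ S i j)
    (hS1 : ∀ i, ∑ j, S i j = 1) (k : Fin p) (δ : ℝ) (hδ : ∀ i, δ ≤ S i k)
    (x : Fin p → ℝ) (d : ℝ) (hx : AuxOsc x d) : AuxOsc (S *ᵥ x) ((1 - δ) * d) := by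
  obtain ⟨a, ha⟩ := hx
  refine ⟨δ * x k + (1 - δ) * a, fun i => ?_⟩
  have hT0 : ∀ j, 0 ≤ S i j - (if j = k then δ else 0) := by
    intro j
    split_ifs with h
    · subst h; linarith [hδ i]
    · simpa using hS i j
  have hT1 : ∑ j, (S i j - (if j = k then δ else 0)) = 1 - δ := by
    rw [Finset.sum_sub_distrib, hS1]; simp
  have hSx : (S *ᵥ x) i = δ * x k + ∑ j, (S i j - (if j = k then δ else 0)) * x j := by
    simp [Matrix.mulVec, dotProduct, sub_mul, Finset.sum_sub_distrib]
  have hlo : (1 - δ) * a ≤ ∑ j, (S i j - (if j = k then δ else 0)) * x j := by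
    rw [← hT1, Finset.sum_mul]
    exact Finset.sum_le_sum fun j _ => mul_le_mul_of_nonneg_left (ha j).1 (hT0 j)
  have hhi : ∑ j, (S i j - (if j = k then δ else 0)) * x j ≤ (1 - δ) * (a + d) := by
    rw [← hT1, Finset.sum_mul]
    exact Finset.sum_le_sum fun j _ => mul_le_mul_of_nonneg_left (ha j).2 (hT0 j)
  rw [hSx]
  constructor <;> linarith

lemma aux_exp_stoch {p : ℕ} (Γ : Matrix (Fin p) (Fin p) ℝ) (hΓ : IsInterconnection Γ)
    (t : ℝ) (ht : 0 ≤ t) :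
    (∀ i j, 0 ≤ NormedSpace.exp (t • Γ) i j) ∧ ∀ i, ∑ j, NormedSpace.exp (t • Γ) i j = 1 := by
  constructor
  · intro i j
    obtain ⟨c, hc⟩ := aux_shift_nonneg (t • Γ) (fun i j hij => by
      simpa using mul_nonneg ht (hΓ.1 i j hij))
    rw [aux_exp_shift _ c]
    exact mul_nonneg (aux_real_exp_pos _).le (aux_exp_nonneg _ (fun i j => (hc i j).2) i j)
  · intro i
    have h := aux_exp_mulVec (t • Γ) (fun _ => 1) (by
      ext i
      simp [Matrix.mulVec, dotProduct, ← Finset.mul_sum, hΓ.2 i])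
    have := congrFun h i
    simpa [Matrix.mulVec, dotProduct] using this

lemma aux_exp_one_pos {p : ℕ} (Γ : Matrix (Fin p) (Fin p) ℝ) (hΓ : IsInterconnection Γ)
    (k : Fin p) (hk : ∀ i : Fin p, Relation.ReflTransGen (fun a b => 0 < Γ a b) i k)
    (i : Fin p) : 0 < NormedSpace.exp Γ i k := by
  obtain ⟨c, hc⟩ := aux_shift_nonneg Γ hΓ.1
  rw [aux_exp_shift _ c]
  exact mul_pos (aux_real_exp_pos _) (aux_exp_pos _ (fun i j => (hc i j).2) i k
    (Relation.ReflTransGen.mono (fun a b hab => lt_of_lt_of_le hab (hc a b).1) _ _ (hk i)))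

/-- The oscillation of `exp (t Γ) x` tends to zero. -/
lemma aux_osc_tendsto {p : ℕ} (Γ : Matrix (Fin p) (Fin p) ℝ)
    (hΓ : IsConnectedInterconnection Γ) (l i j : Fin p) :
    Tendsto (fun t : ℝ => NormedSpace.exp (t • Γ) i l - NormedSpace.exp (t • Γ) j l)
      atTop (𝓝 0) := by
  obtain ⟨hI, k, hk⟩ := hΓ
  have hpos := aux_exp_one_pos Γ hI k hk
  have : Nonempty (Fin p) := ⟨k⟩
  obtain ⟨i₀, hi₀⟩ := Finite.exists_min (fun i : Fin p => NormedSpace.exp Γ i k)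
  set δ := NormedSpace.exp Γ i₀ k with hδ
  have hδ0 : 0 < δ := hpos i₀
  obtain ⟨hs0, hs1⟩ := aux_exp_stoch Γ hI 1 zero_le_one
  rw [one_smul] at hs0 hs1
  have hδ1 : δ ≤ 1 := by
    rw [← hs1 i₀]
    exact Finset.single_le_sum (f := fun j => NormedSpace.exp Γ i₀ j)
      (fun j _ => hs0 i₀ j) (Finset.mem_univ k)
  have hpow : ∀ n : ℕ, AuxOsc ((NormedSpace.exp Γ ^ n) *ᵥ (Pi.single l (1 : ℝ))) ((1 - δ) ^ n) := by
    intro n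
    induction n with
    | zero =>
      refine ⟨0, fun i => ?_⟩
      by_cases h : i = l
      · subst h; simp
      · simp [h]
    | succ n ih =>
      rw [pow_succ', pow_succ', ← Matrix.mulVec_mulVec]
      exact aux_contract _ hs0 hs1 k δ hi₀ _ _ ih
  have hbound : ∀ t : ℝ, 0 ≤ t →
      |NormedSpace.exp (t • Γ) i l - NormedSpace.exp (t • Γ) j l| ≤ (1 - δ) ^ ⌊t⌋₊ := by
    intro t ht
    have hsplit : t • Γ = (t - ⌊t⌋₊) • Γ + (⌊t⌋₊ : ℕ) • Γ := by
      rw [← Nat.cast_smul_eq_nsmul ℝ, ← add_smul]; congr 1; ring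
    have hcomm : Commute ((t - ⌊t⌋₊) • Γ) ((⌊t⌋₊ : ℕ) • Γ) :=
      ((Commute.refl Γ).smul_left _).smul_right _
    have hE : NormedSpace.exp (t • Γ)
        = NormedSpace.exp ((t - ⌊t⌋₊) • Γ) * NormedSpace.exp Γ ^ ⌊t⌋₊ := by
      conv_lhs => rw [hsplit, Matrix.exp_add_of_commute _ _ hcomm, Matrix.exp_nsmul]
    obtain ⟨h0, h1⟩ := aux_exp_stoch Γ hI (t - ⌊t⌋₊) (sub_nonneg.2 (Nat.floor_le ht))
    have hosc := aux_contract _ h0 h1 k 0 (fun i => h0 i k) _ _ (hpow ⌊t⌋₊)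
    rw [Matrix.mulVec_mulVec, ← hE, sub_zero, one_mul] at hosc
    obtain ⟨a, ha⟩ := hosc
    have hi := ha i
    have hj := ha j
    simp only [Matrix.mulVec_single_one, Matrix.col_apply] at hi hj
    rw [abs_le]
    constructor <;> linarith [hi.1, hi.2, hj.1, hj.2]
  have hlim : Tendsto (fun t : ℝ => (1 - δ) ^ ⌊t⌋₊) atTop (𝓝 0) :=
    (tendsto_pow_atTop_nhds_zero_of_lt_one (by linarith) (by linarith)).comp
      tendsto_nat_floor_atTop
  refine squeeze_zero_norm' ?_ hlim
  filter_upwards [eventually_ge_atTop 0] with t ht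
  simpa using hbound t ht

/-- Key convergence: left null vectors average the columns of the exponential. -/
lemma aux_key {p : ℕ} (Γ : Matrix (Fin p) (Fin p) ℝ)
    (hΓ : IsConnectedInterconnection Γ) (r : Fin p → ℝ) (hr : r ᵥ* Γ = 0) (i l : Fin p) :
    Tendsto (fun t : ℝ => (∑ j, r j) * NormedSpace.exp (t • Γ) i l) atTop (𝓝 (r l)) := by
  have h : Tendsto (fun t : ℝ => r l +
      ∑ j, r j * (NormedSpace.exp (t • Γ) i l - NormedSpace.exp (t • Γ) j l)) atTop
      (𝓝 (r l + ∑ j, r j * 0)) :=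
    tendsto_const_nhds.add (tendsto_finsetSum _ fun j _ =>
      (aux_osc_tendsto Γ hΓ l i j).const_mul (r j))
  simp only [mul_zero, Finset.sum_const_zero, add_zero] at h
  refine h.congr fun t => ?_
  have hrt := congrFun (aux_exp_vecMul (t • Γ) r (by rw [Matrix.vecMul_smul, hr, smul_zero])) l
  simp only [Matrix.vecMul, dotProduct] at hrt
  simp only [mul_sub, Finset.sum_sub_distrib, hrt, Finset.sum_mul]
  ring

lemma aux_zero {p : ℕ} (Γ : Matrix (Fin p) (Fin p) ℝ)
    (hΓ : IsConnectedInterconnection Γ) (r : Fin p → ℝ) (hr : r ᵥ* Γ = 0)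
    (hs : ∑ j, r j = 0) : r = 0 := by
  ext l
  have h := aux_key Γ hΓ r hr l l
  simp only [hs, zero_mul] at h
  exact tendsto_nhds_unique h tendsto_const_nhds

end Helpers

/-- For a connected interconnection `Γ` there is a unique `r` with `rᵀΓ = 0` and `rᵀ1 = 1`,
and for this `r` one has `exp(tΓ) → 1rᵀ` as `t → ∞`. -/
theorem connected_interconnection_exp_limit
    (p : ℕ) (Γ : Matrix (Fin p) (Fin p) ℝ) (hΓ : IsConnectedInterconnection Γ) :
    (∃! r : Fin p → ℝ, r ᵥ* Γ = 0 ∧ ∑ i, r i = 1) ∧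
    ∀ r : Fin p → ℝ, r ᵥ* Γ = 0 → ∑ i, r i = 1 →
      Tendsto (fun t : ℝ => NormedSpace.exp (t • Γ)) atTop
        (nhds (vecMulVec (fun _ => (1 : ℝ)) r)) := by
  refine ⟨?_, ?_⟩
  · have hdet : Γ.det = 0 := by
      obtain ⟨hI, k, -⟩ := hΓ
      refine Matrix.exists_mulVec_eq_zero_iff.1 ⟨fun _ => 1, ?_, ?_⟩
      · intro h
        simpa using congrFun h k
      · ext i
        simp [Matrix.mulVec, dotProduct, hI.2 i]
    obtain ⟨v, hv0, hv⟩ := Matrix.exists_vecMul_eq_zero_iff.2 hdet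
    have hs : ∑ j, v j ≠ 0 := fun h => hv0 (aux_zero Γ hΓ v hv h)
    refine ⟨(∑ j, v j)⁻¹ • v, ⟨?_, ?_⟩, ?_⟩
    · rw [Matrix.smul_vecMul, hv, smul_zero]
    · simp only [Pi.smul_apply, smul_eq_mul, ← Finset.mul_sum]
      exact inv_mul_cancel₀ hs
    · rintro y ⟨hy, hy1⟩
      refine sub_eq_zero.1 (aux_zero Γ hΓ _ ?_ ?_)
      · rw [Matrix.sub_vecMul, hy, Matrix.smul_vecMul, hv, smul_zero, sub_zero]
      · simp only [Pi.sub_apply, Finset.sum_sub_distrib, Pi.smul_apply, smul_eq_mul,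
          ← Finset.mul_sum, hy1]
        rw [inv_mul_cancel₀ hs, sub_self]
  · intro r hr hr1
    refine tendsto_pi_nhds.2 fun i => tendsto_pi_nhds.2 fun l => ?_
    have h := aux_key Γ hΓ r hr i l
    simpa [hr1, Matrix.vecMulVec_apply] using h
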